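/- arXiv:nlin/0205019 — 3 statements merged into one kernel-verified Lean document; each statement's English description precedes it below -/
import Mathlib

section
/- Let q, a_0, a_1 be nonzero complex constants and let H : ℤ × ℤ → ℂ (written H_ν(n)) satisfy the contiguity relations H_ν(n+1) − H_ν(n) = −a_0² q^{2n}·H_{ν−1}(n) and H_{ν+1}(n) − H_ν(n) = −a_0² a_1² q^{2ν}·H_ν(n−1) for all ν, n ∈ ℤ. Then H satisfies the three-term relation in ν: H_{ν+1}(n) = (1 + a_0² q^{2n} − a_0² a_1² q^{2ν})·H_ν(n) − a_0² q^{2n}·H_{ν−1}(n) for all ν, n ∈ ℤ. -/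
/-!
Going from `(ν+1, n)` to `(ν, n-1)` and then to `(ν, n)` and `(ν-1, n-1)`, the contiguity relations
leave the unwanted value `H_{ν-1}(n-1)`. Since `q^{2ν} q^{2(n-1)} = q^{2n} q^{2(ν-1)}`, its
coefficient is exactly the one for which the `ν`-relation at `ν - 1` replaces it by a combination of
`H_ν(n)` and `H_{ν-1}(n)`.
-/

theorem mul_zpow_mul_mul_zpow_sub_one {G₀ : Type*} [CommGroupWithZero G₀] {q : G₀} (hq : q ≠ 0)
    (a b : G₀) (k i j : ℤ) :
    a * q ^ (k * i) * (b * q ^ (k * (j - 1))) = b * q ^ (k * j) * (a * q ^ (k * (i - 1))) := by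
  have exponents : k * i + k * (j - 1) = k * j + k * (i - 1) := by ring
  rw [mul_mul_mul_comm a, mul_mul_mul_comm b, mul_comm a, ← zpow_add₀ hq, ← zpow_add₀ hq,
    exponents]

theorem H_three_term_in_nu_general {R M : Type*} [Ring R] [AddCommGroup M] [Module R M]
    {α β : ℤ → R} {H : ℤ → ℤ → M}
    (hβα : ∀ ν n : ℤ, β ν * α (n - 1) = α n * β (ν - 1))
    (hn : ∀ ν n : ℤ, H ν (n + 1) - H ν n = -α n • H (ν - 1) n)
    (hν : ∀ ν n : ℤ, H (ν + 1) n - H ν n = -β ν • H ν (n - 1)) (ν n : ℤ) :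
    H (ν + 1) n = (1 + α n - β ν) • H ν n - α n • H (ν - 1) n := by
  have raise_ν : H (ν + 1) n = H ν n - β ν • H ν (n - 1) := by
    rw [sub_eq_add_neg, ← neg_smul, ← hν, add_sub_cancel]
  have lower_n : H ν (n - 1) = H ν n + α (n - 1) • H (ν - 1) (n - 1) := by
    have h := hn ν (n - 1)
    rw [sub_add_cancel, neg_smul, sub_eq_iff_eq_add'] at h
    rw [h, neg_add_cancel_right]
  have lower_ν : β (ν - 1) • H (ν - 1) (n - 1) = H (ν - 1) n - H ν n := by
    have h := hν (ν - 1) n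
    rw [sub_add_cancel, neg_smul] at h
    rw [← neg_sub (H ν n), h, neg_neg]
  calc
    H (ν + 1) n = H ν n - β ν • (H ν n + α (n - 1) • H (ν - 1) (n - 1)) := by rw [raise_ν, lower_n]
    _ = H ν n - β ν • H ν n - α n • β (ν - 1) • H (ν - 1) (n - 1) := by
      rw [smul_add, ← mul_smul, hβα, mul_smul, sub_add_eq_sub_sub]
    _ = H ν n - β ν • H ν n - α n • (H (ν - 1) n - H ν n) := by rw [lower_ν]
    _ = (1 + α n - β ν) • H ν n - α n • H (ν - 1) n := by
      rw [sub_smul, add_smul, one_smul, smul_sub]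
      abel

/-- the contiguity relations for `H_ν(n)` imply the three-term
relation in `ν`:
`H_{ν+1}(n) = (1 + a₀²q^{2n} − a₀²a₁²q^{2ν})H_ν(n) − a₀²q^{2n}H_{ν−1}(n)`. -/
theorem H_three_term_in_nu (q a0 a1 : ℂ)
    (hq : q ≠ 0) (ha0 : a0 ≠ 0) (ha1 : a1 ≠ 0)
    (H : ℤ → ℤ → ℂ)
    (hH1 : ∀ ν n : ℤ, H ν (n + 1) - H ν n = -(a0 ^ 2 * q ^ (2 * n)) * H (ν - 1) n)
    (hH2 : ∀ ν n : ℤ, H (ν + 1) n - H ν n = -(a0 ^ 2 * a1 ^ 2 * q ^ (2 * ν)) * H ν (n - 1)) :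
    ∀ ν n : ℤ, H (ν + 1) n =
      (1 + a0 ^ 2 * q ^ (2 * n) - a0 ^ 2 * a1 ^ 2 * q ^ (2 * ν)) * H ν n -
        a0 ^ 2 * q ^ (2 * n) * H (ν - 1) n :=
  H_three_term_in_nu_general
    (α := fun n ↦ a0 ^ 2 * q ^ (2 * n))
    (β := fun ν ↦ a0 ^ 2 * a1 ^ 2 * q ^ (2 * ν))
    (mul_zpow_mul_mul_zpow_sub_one hq (a0 ^ 2 * a1 ^ 2) (a0 ^ 2) 2) hH1 hH2
end

section
/- Let q, a_0, a_1 be nonzero complex constants and let H : ℤ × ℤ → ℂ (written H_ν(n)) satisfy the contiguity relations H_ν(n+1) − H_ν(n) = −a_0² q^{2n}·H_{ν−1}(n) and H_{ν+1}(n) − H_ν(n) = −a_0² a_1² q^{2ν}·H_ν(n−1) for all ν, n ∈ ℤ. For N ∈ ℤ_{≥0} define φ_ν^{N}(n) = det( H_{ν+i−1}(n+j−1) )_{1 ≤ i,j ≤ N}, with φ_ν^{0}(n) = 1. Then, for every fixed ν ∈ ℤ and N ∈ ℤ_{≥0}, the functions f_0(n) = −a_0 q^{n+2N} · φ_{ν−1}^{N+1}(n)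 φ_ν^{N}(n) / ( φ_ν^{N+1}(n) φ_{ν−1}^{N}(n) ) and f_1(n) = (1/(a_0² a_1 q^{n+ν+2N−2})) · φ_ν^{N+1}(n) φ_{ν−1}^{N}(n−1) / ( φ_{ν−1}^{N+1}(n−1) φ_ν^{N}(n) ) solve the q-Painlevé III system qP3(ν, p) with p = q^{2N+1} (i.e., c = 1), provided all determinants occurring in these expressions are nonzero. -/
/-- `f₀, f₁ : ℤ → ℂ` solve the `q`-Painlevé III system `qP3(ν, p)`. -/
def qP3 (q a0 a1 : ℂ) (ν : ℤ) (p : ℂ) (f0 f1 : ℤ → ℂ) : Prop :=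
  ∀ n : ℤ,
    f1 (n + 1) = p / (f0 n * f1 n) * ((1 + a0 * q ^ n * f0 n) / (a0 * q ^ n + f0 n)) ∧
    f0 (n - 1) = p / (f0 n * f1 n) * ((a1 * q ^ (ν - n) + f1 n) / (1 + a1 * q ^ (ν - n) * f1 n))

/-- The `N×N` determinant `φ_ν^N(n) = det(H_{ν+i−1}(n+j−1))_{1 ≤ i,j ≤ N}`
(with `φ_ν^0(n) = 1`). -/
noncomputable def phiDet (H : ℤ → ℤ → ℂ) (N : ℕ) (ν n : ℤ) : ℂ :=
  (Matrix.of fun i j : Fin N => H (ν + (i.val : ℤ)) (n + (j.val : ℤ))).det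

/-!
Write `W` for the matrix of `φ_m^{N}(n)`, `K_m = a₀² a₁² q^{2m}` and `c_n = a₀² q^{2n}`. Each of the
four factors `1 + a₀ qⁿ f₀`, `a₀ qⁿ + f₀`, `a₁ q^{ν-n} + f₁`, `1 + a₁ q^{ν-n} f₁` turns out to be a
single ratio of products of determinants, after which the system is a cancellation.

The last three factorisations are Plücker relations. The contiguity relation in `m` says that the
rows `x_m`, `y_m` of the determinants based at `n` and `n + 1` satisfy `y_{m+1} = y_m - K_m x_m`, so
that the determinants involved are, up to factors `K_i`, minors of one matrix `w` bordered by one or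
two rows; the contiguity relation in `n` is the same statement for the transpose.

The first factorisation is not a Plücker relation: it also uses that `K` and `c` are proportional.
Let `U` and `V` be `W` with columns, respectively rows, shifted by one. The two contiguity relations
give `U - V = diag(K) W - W diag(c)`, and multiplying by the adjugate of `W` and taking traces
evaluates the difference of the determinants of `W` whose last column or row is shifted. Jacobi
identities of Toda type then reduce the claim to the Plücker relation.
-/

section Determinants

open Matrix

variable {R : Type*}

section CramerRelation

variable [CommRing R] {ι : Type*} [Fintype ι] [DecidableEq ι]

theorem sum_det_updateRow_smul_row (M : Matrix ι ι R) (b : ι → R) :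
    ∑ k, (M.updateRow k b).det • M k = M.det • b := by
  simpa [mulVec_eq_sum, cramer_transpose_apply, col_transpose, Matrix.row_def] using
    mulVec_cramer Mᵀ b

theorem det_updateRow_updateRow_swap (M : Matrix ι ι R) {i j : ι} (hij : i ≠ j) (a b : ι → R) :
    ((M.updateRow i a).updateRow j b).det = -((M.updateRow i b).updateRow j a).det := by
  have hperm : (M.updateRow i a).updateRow j b =
      ((M.updateRow i b).updateRow j a).submatrix (Equiv.swap i j) id := by
    ext r c
    obtain rfl | hi := eq_or_ne r i
    · simp [hij]
    obtain rfl | hj := eq_or_ne r j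
    · simp [hij]
    · simp [Equiv.swap_apply_of_ne_of_ne hi hj, hi, hj]
  rw [hperm, det_permute, Equiv.Perm.sign_swap hij]
  simp

theorem det_mul_det_updateRow_updateRow (M : Matrix ι ι R) {i j : ι} (hij : i ≠ j)
    (a b : ι → R) :
    M.det * ((M.updateRow i a).updateRow j b).det =
      (M.updateRow i a).det * (M.updateRow j b).det -
        (M.updateRow i b).det * (M.updateRow j a).det := by
  -- Expand `b` in the rows of `M` by Cramer's rule and apply the linear form
  -- `v ↦ det (M with rows i, j replaced by a, v)`, which kills every row but rows `i` and `j`.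
  let L : (ι → R) →ₗ[R] R := LinearMap.proj j ∘ₗ cramer (M.updateRow i a)ᵀ
  have L_apply (v : ι → R) : L v = ((M.updateRow i a).updateRow j v).det :=
    cramer_transpose_apply _ _ _
  have L_row_i : L (M i) = -(M.updateRow j a).det := by
    rw [L_apply, det_updateRow_updateRow_swap M hij, updateRow_eq_self]
  have L_row_j : L (M j) = (M.updateRow i a).det := by
    rw [L_apply, ← updateRow_ne (M := M) (b := a) hij.symm, updateRow_eq_self]
  have L_row_other (k : ι) (hk : k ≠ i ∧ k ≠ j) : L (M k) = 0 := by
    rw [L_apply]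
    exact det_zero_of_row_eq hk.2 (by simp [hk.1, hk.2])
  have key := congrArg L (sum_det_updateRow_smul_row M b)
  simp only [map_sum, map_smul, smul_eq_mul] at key
  rw [Finset.sum_eq_add i j hij (fun k _ hk => by rw [L_row_other k hk, mul_zero])
    (by simp) (by simp), L_row_i, L_row_j, L_apply] at key
  linear_combination -key

end CramerRelation

section ConsRow

variable {k m n : ℕ}

/-- The matrix with first row `a` followed by the rows of `w`. -/
def consRow (a : Fin n → R) (w : Matrix (Fin m) (Fin n) R) : Matrix (Fin (m + 1)) (Fin n) R :=
  of (Fin.cons a w)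

@[simp]
theorem consRow_zero (a : Fin n → R) (w : Matrix (Fin m) (Fin n) R) : consRow a w 0 = a := rfl

@[simp]
theorem consRow_succ (a : Fin n → R) (w : Matrix (Fin m) (Fin n) R) (i : Fin m) :
    consRow a w i.succ = w i := rfl

@[simp]
theorem consRow_one (a : Fin n → R) (w : Matrix (Fin (m + 1)) (Fin n) R) :
    consRow a w 1 = w 0 := rfl

@[simp]
theorem updateRow_zero_consRow (a c : Fin n → R) (w : Matrix (Fin m) (Fin n) R) :
    (consRow a w).updateRow 0 c = consRow c w := by
  ext i j
  cases i using Fin.cases <;> simp [updateRow_apply]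

@[simp]
theorem updateRow_succ_consRow (a c : Fin n → R) (w : Matrix (Fin m) (Fin n) R) (i : Fin m) :
    (consRow a w).updateRow i.succ c = consRow a (w.updateRow i c) := by
  ext r j
  cases r using Fin.cases <;> simp [updateRow_apply, (Fin.succ_ne_zero _).symm]

theorem submatrix_id_consRow {o : ℕ} (a : Fin n → R) (w : Matrix (Fin m) (Fin n) R)
    (f : Fin o → Fin n) :
    (consRow a w).submatrix id f = consRow (a ∘ f) (w.submatrix id f) := by
  ext i j
  cases i using Fin.cases <;> rfl

variable [CommRing R]

theorem det_smul_consRow (r : R) (a : Fin (n + 1) → R) (w : Matrix (Fin n) (Fin (n + 1)) R) :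
    (consRow (r • a) w).det = r * (consRow a w).det := by
  simpa using det_updateRow_smul (consRow a w) 0 r a

theorem det_consRow_consRow_swap (w : Matrix (Fin k) (Fin (k + 2)) R) (a b : Fin (k + 2) → R) :
    (consRow a (consRow b w)).det = -(consRow b (consRow a w)).det := by
  simpa only [updateRow_zero_consRow, updateRow_succ_consRow] using
    det_updateRow_updateRow_swap (consRow a (consRow b w)) (Fin.succ_ne_zero 0).symm a b

theorem det_consRow_consRow_mul (w : Matrix (Fin k) (Fin (k + 2)) R) (a b c d : Fin (k + 2) → R) :
    (consRow a (consRow b w)).det * (consRow c (consRow d w)).det =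
      (consRow c (consRow b w)).det * (consRow a (consRow d w)).det -
        (consRow d (consRow b w)).det * (consRow a (consRow c w)).det := by
  simpa only [updateRow_zero_consRow, updateRow_succ_consRow] using
    det_mul_det_updateRow_updateRow (consRow a (consRow b w)) (Fin.succ_ne_zero 0).symm c d

theorem det_consRow_last_init (A : Matrix (Fin (n + 1)) (Fin (n + 1)) R) :
    (consRow ((-1 : R) ^ n • A (Fin.last n)) (A.submatrix Fin.castSucc id)).det = A.det := by
  have hrot : (consRow (A (Fin.last n)) (A.submatrix Fin.castSucc id)).submatrix
      (finRotate (n + 1)) id = A := by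
    ext i j
    cases i using Fin.lastCases <;> simp
  rw [det_smul_consRow]
  have hdet := det_permute (finRotate (n + 1))
    (consRow (A (Fin.last n)) (A.submatrix Fin.castSucc id))
  rw [hrot, sign_finRotate] at hdet
  simp [hdet]

theorem det_consRow_consRow_last_init (a : Fin (n + 2) → R)
    (A : Matrix (Fin (n + 1)) (Fin (n + 2)) R) :
    (consRow a (consRow ((-1 : R) ^ n • A (Fin.last n)) (A.submatrix Fin.castSucc id))).det =
      (consRow a A).det := by
  rw [det_succ_row_zero, det_succ_row_zero]
  refine Finset.sum_congr rfl fun p _ => ?_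
  have minor_consRow (B : Matrix (Fin (n + 1)) (Fin (n + 2)) R) :
      (consRow a B).submatrix Fin.succ p.succAbove = B.submatrix id p.succAbove := rfl
  rw [minor_consRow, minor_consRow, submatrix_id_consRow,
    ← det_consRow_last_init (A.submatrix id p.succAbove)]
  rfl

theorem det_consRow_consRow_single (w : Matrix (Fin k) (Fin (k + 2)) R) (a : Fin (k + 2) → R)
    (p : Fin (k + 2)) :
    (consRow a (consRow (Pi.single p ((-1) ^ (p + 1 : ℕ))) w)).det =
      ((consRow a w).submatrix id p.succAbove).det := by
  have hminor : (consRow a (consRow (Pi.single p ((-1) ^ (p + 1 : ℕ))) w)).submatrix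
      (Fin.succAbove (Fin.succ 0)) p.succAbove = (consRow a w).submatrix id p.succAbove := by
    ext i j
    cases i using Fin.cases with
    | zero => simp
    | succ i => simp [Fin.succAbove_of_le_castSucc, Fin.le_def]
  rw [det_succ_row _ (Fin.succ 0), Fintype.sum_eq_single p, hminor]
  · simp [add_comm 1, ← mul_pow]
  · intro q hq; simp [hq]

theorem det_consRow_single_single_last (w : Matrix (Fin k) (Fin (k + 2)) R) (p : Fin (k + 1)) :
    (consRow (Pi.single p.castSucc ((-1) ^ (p + 1 : ℕ)))
      (consRow (Pi.single (Fin.last _) ((-1) ^ (k + 2))) w)).det =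
      -(w.submatrix id (Fin.castSucc ∘ p.succAbove)).det := by
  have h := det_consRow_consRow_single w (Pi.single p.castSucc ((-1) ^ (p + 1 : ℕ))) (Fin.last _)
  rw [Fin.val_last] at h
  rw [h, submatrix_id_consRow, det_succ_row_zero, Fintype.sum_eq_single p]
  · have hminor : (consRow
        (Pi.single p.castSucc ((-1) ^ (p + 1 : ℕ)) ∘ (Fin.last (k + 1)).succAbove)
        (w.submatrix id (Fin.last (k + 1)).succAbove)).submatrix Fin.succ p.succAbove =
          w.submatrix id (Fin.castSucc ∘ p.succAbove) := by
      rw [Fin.succAbove_last]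
      rfl
    rw [hminor, consRow_zero, Function.comp_apply, Fin.succAbove_last, Pi.single_eq_same]
    simp [pow_succ, ← mul_pow]
  · intro q hq; simp [hq]

theorem plucker_three_term (w : Matrix (Fin k) (Fin (k + 2)) R) (a b c : Fin (k + 2) → R)
    (p : Fin (k + 2)) :
    (consRow a (consRow b w)).det * ((consRow c w).submatrix id p.succAbove).det +
        (consRow b (consRow c w)).det * ((consRow a w).submatrix id p.succAbove).det =
      (consRow a (consRow c w)).det * ((consRow b w).submatrix id p.succAbove).det := by
  simp only [← det_consRow_consRow_single]
  set e : Fin (k + 2) → R := Pi.single p ((-1) ^ (p + 1 : ℕ))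
  linear_combination det_consRow_consRow_mul w a b c e +
    (consRow a (consRow e w)).det * det_consRow_consRow_swap w c b -
    (consRow a (consRow c w)).det * det_consRow_consRow_swap w e b

theorem desnanot_jacobi (w : Matrix (Fin k) (Fin (k + 2)) R) (a b : Fin (k + 2) → R)
    (p : Fin (k + 1)) :
    (consRow a (consRow b w)).det * (w.submatrix id (Fin.castSucc ∘ p.succAbove)).det =
      ((consRow a w).submatrix id (Fin.last _).succAbove).det *
          ((consRow b w).submatrix id p.castSucc.succAbove).det -
        ((consRow a w).submatrix id p.castSucc.succAbove).det *
          ((consRow b w).submatrix id (Fin.last _).succAbove).det := by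
  simp only [← det_consRow_consRow_single, Fin.val_castSucc, Fin.val_last]
  set e : Fin (k + 2) → R := Pi.single p.castSucc ((-1) ^ (p + 1 : ℕ))
  set e' : Fin (k + 2) → R := Pi.single (Fin.last _) ((-1) ^ (k + 2))
  have hee : (consRow e (consRow e' w)).det = -(w.submatrix id (Fin.castSucc ∘ p.succAbove)).det :=
    det_consRow_single_single_last w p
  linear_combination -det_consRow_consRow_mul w a b e e' + (consRow a (consRow b w)).det * hee +
    (consRow a (consRow e w)).det * det_consRow_consRow_swap w e' b -
    (consRow a (consRow e' w)).det * det_consRow_consRow_swap w e b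

end ConsRow

section Rows

variable {k l n : ℕ}

/-- The matrix whose rows are `x m, …, x (m + l - 1)`, for a family of rows indexed by `ℤ`. -/
def rows (x : ℤ → Fin n → R) (m : ℤ) (l : ℕ) : Matrix (Fin l) (Fin n) R :=
  of fun i => x (m + (i.val : ℤ))

theorem consRow_rows (x : ℤ → Fin n → R) (m : ℤ) (l : ℕ) :
    consRow (x m) (rows x (m + 1) l) = rows x m (l + 1) := by
  ext i j
  cases i using Fin.cases <;> simp [rows, add_assoc, add_comm (1 : ℤ)]

theorem submatrix_rows (x : ℤ → Fin n → R) (m : ℤ) (f : Fin k → Fin n) :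
    (rows x m l).submatrix id f = rows (fun i => x i ∘ f) m l := rfl

variable [CommRing R]

theorem det_consRow_consRow_last_rows (a : Fin (k + 2) → R) (x : ℤ → Fin (k + 2) → R) (m : ℤ) :
    (consRow a (consRow ((-1 : R) ^ k • x (m + k)) (rows x m k))).det =
      (consRow a (rows x m (k + 1))).det :=
  det_consRow_consRow_last_init a (rows x m (k + 1))

theorem det_consRow_last_rows (x : ℤ → Fin (k + 1) → R) (m : ℤ) :
    (consRow ((-1 : R) ^ k • x (m + k)) (rows x m k)).det = (rows x m (k + 1)).det :=
  det_consRow_last_init (rows x m (k + 1))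

theorem det_consRow_prod_smul_rows {x y : ℤ → Fin (l + 1) → R} {κ : ℤ → R}
    (hxy : ∀ i, y (i + 1) = y i - κ i • x i) (m : ℤ) :
    (consRow ((∏ i ∈ Finset.range l, -κ (m + i)) • y m) (rows x m l)).det =
      (rows y m (l + 1)).det := by
  -- Subtracting from each row of `rows y` its predecessor leaves `y m` and multiples of the `x i`.
  let c : Fin (l + 1) → R := Fin.cons 1 fun i : Fin l => -κ (m + i.val)
  have hscale := det_mul_column c (consRow (y m) (rows x m l))
  rw [Fin.prod_univ_succ] at hscale
  rw [det_smul_consRow, Finset.prod_range]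
  simp only [c, Fin.cons_zero, one_mul, Fin.cons_succ] at hscale
  rw [← hscale]
  symm
  apply det_eq_of_forall_row_eq_smul_add_pred fun _ => 1
  · intro j; simp [rows]
  · intro i j
    simp only [rows, of_apply, consRow_succ, Fin.cons_succ, Fin.val_castSucc, Fin.val_succ,
      Nat.cast_add, Nat.cast_one, ← add_assoc, hxy, Pi.sub_apply, Pi.smul_apply, smul_eq_mul]
    ring

end Rows

section Ladder

variable [CommRing R] {k : ℕ} {x y : ℤ → Fin (k + 2) → R} {κ : ℤ → R}

theorem det_consRow_consRow_add_smul (w : Matrix (Fin k) (Fin (k + 2)) R) (a b : Fin (k + 2) → R)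
    (r : R) : (consRow a (consRow (b + r • a) w)).det = (consRow a (consRow b w)).det := by
  simpa only [updateRow_succ_consRow, updateRow_zero_consRow, consRow_zero, consRow_succ] using
    det_updateRow_add_smul_self (consRow a (consRow b w)) (Fin.succ_ne_zero 0) r

theorem det_consRow_first_last_rows (x : ℤ → Fin (k + 2) → R) (m : ℤ) :
    (consRow (x m) (consRow ((-1 : R) ^ k • x (m + 1 + k)) (rows x (m + 1) k))).det =
      (rows x m (k + 2)).det := by
  rw [det_consRow_consRow_last_rows, consRow_rows]

theorem mul_det_consRow_first_prod_smul_rows (hxy : ∀ i, y (i + 1) = y i - κ i • x i) (m : ℤ) :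
    κ m * (consRow (x m) (consRow ((∏ i ∈ Finset.range k, -κ (m + 1 + i)) • y (m + 1))
      (rows x (m + 1) k))).det = (rows y m (k + 2)).det := by
  set P := ∏ i ∈ Finset.range k, -κ (m + 1 + i) with hP
  have hprod : ∏ i ∈ Finset.range (k + 1), -κ (m + i) = -κ m * P := by
    simp [Finset.prod_range_succ', hP, add_assoc, add_comm (1 : ℤ), mul_comm]
  have hy : P • y (m + 1) = P • y m + (-(P * κ m)) • x m := by
    rw [hxy]; module
  rw [← det_consRow_prod_smul_rows hxy, hprod, hy, det_consRow_consRow_add_smul, mul_smul,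
    det_smul_consRow, ← consRow_rows, det_consRow_consRow_swap]
  ring

theorem mul_det_consRow_last_prod_smul_rows (hxy : ∀ i, y (i + 1) = y i - κ i • x i) (m : ℤ) :
    κ (m + k) * (consRow ((-1 : R) ^ k • x (m + k))
      (consRow ((∏ i ∈ Finset.range k, -κ (m + i)) • y m) (rows x m k))).det =
      (rows y m (k + 2)).det := by
  rw [← det_consRow_prod_smul_rows hxy, Finset.prod_range_succ, ← det_consRow_consRow_last_rows,
    det_consRow_consRow_swap, mul_comm (∏ i ∈ Finset.range k, _), mul_smul,
    det_smul_consRow (-κ (m + k))]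
  ring

theorem det_submatrix_consRow_last_rows (x : ℤ → Fin (k + 2) → R) (m : ℤ) (p : Fin (k + 2)) :
    ((consRow ((-1 : R) ^ k • x (m + k)) (rows x m k)).submatrix id p.succAbove).det =
      ((rows x m (k + 1)).submatrix id p.succAbove).det := by
  rw [submatrix_id_consRow, submatrix_rows]
  exact det_consRow_last_rows (fun i => x i ∘ p.succAbove) m

theorem det_submatrix_consRow_prod_smul_rows (hxy : ∀ i, y (i + 1) = y i - κ i • x i) (m : ℤ)
    (p : Fin (k + 2)) :
    ((consRow ((∏ i ∈ Finset.range k, -κ (m + i)) • y m) (rows x m k)).submatrix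
      id p.succAbove).det = ((rows y m (k + 1)).submatrix id p.succAbove).det := by
  rw [submatrix_id_consRow, submatrix_rows]
  exact det_consRow_prod_smul_rows (x := fun i => x i ∘ p.succAbove)
    (y := fun i => y i ∘ p.succAbove) (fun i => congrArg (· ∘ p.succAbove) (hxy i)) m

theorem det_rows_plucker (hxy : ∀ i, y (i + 1) = y i - κ i • x i) (m : ℤ) (p : Fin (k + 2)) :
    κ m * κ (m + 1 + k) * (rows x m (k + 2)).det *
          ((rows y (m + 1) (k + 1)).submatrix id p.succAbove).det +
        κ m * (rows y (m + 1) (k + 2)).det * ((rows x m (k + 1)).submatrix id p.succAbove).det =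
      κ (m + 1 + k) * (rows y m (k + 2)).det *
        ((rows x (m + 1) (k + 1)).submatrix id p.succAbove).det := by
  have h := plucker_three_term (rows x (m + 1) k) (x m) ((-1 : R) ^ k • x (m + 1 + k))
    ((∏ i ∈ Finset.range k, -κ (m + 1 + i)) • y (m + 1)) p
  rw [det_submatrix_consRow_last_rows, det_submatrix_consRow_prod_smul_rows hxy, consRow_rows] at h
  rw [← det_consRow_first_last_rows, ← mul_det_consRow_first_prod_smul_rows hxy m,
    ← mul_det_consRow_last_prod_smul_rows hxy]
  linear_combination κ m * κ (m + 1 + k) * h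

theorem det_rows_desnanot_jacobi (x : ℤ → Fin (k + 2) → R) (m : ℤ) (p : Fin (k + 1)) :
    (rows x m (k + 2)).det * ((rows x (m + 1) k).submatrix id (Fin.castSucc ∘ p.succAbove)).det =
      ((rows x m (k + 1)).submatrix id (Fin.last _).succAbove).det *
          ((rows x (m + 1) (k + 1)).submatrix id p.castSucc.succAbove).det -
        ((rows x m (k + 1)).submatrix id p.castSucc.succAbove).det *
          ((rows x (m + 1) (k + 1)).submatrix id (Fin.last _).succAbove).det := by
  rw [← det_consRow_first_last_rows, desnanot_jacobi, det_submatrix_consRow_last_rows,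
    det_submatrix_consRow_last_rows, consRow_rows]

theorem det_rows_desnanot_jacobi_first (hxy : ∀ i, y (i + 1) = y i - κ i • x i) (m : ℤ)
    (p : Fin (k + 1)) :
    (rows y m (k + 2)).det * ((rows x (m + 1) k).submatrix id (Fin.castSucc ∘ p.succAbove)).det =
      κ m * (((rows x m (k + 1)).submatrix id (Fin.last _).succAbove).det *
          ((rows y (m + 1) (k + 1)).submatrix id p.castSucc.succAbove).det -
        ((rows x m (k + 1)).submatrix id p.castSucc.succAbove).det *
          ((rows y (m + 1) (k + 1)).submatrix id (Fin.last _).succAbove).det) := by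
  rw [← mul_det_consRow_first_prod_smul_rows hxy, mul_assoc, desnanot_jacobi,
    det_submatrix_consRow_prod_smul_rows hxy, det_submatrix_consRow_prod_smul_rows hxy,
    consRow_rows]

theorem det_rows_desnanot_jacobi_last (hxy : ∀ i, y (i + 1) = y i - κ i • x i) (m : ℤ)
    (p : Fin (k + 1)) :
    (rows y m (k + 2)).det * ((rows x m k).submatrix id (Fin.castSucc ∘ p.succAbove)).det =
      κ (m + k) * (((rows x m (k + 1)).submatrix id (Fin.last _).succAbove).det *
          ((rows y m (k + 1)).submatrix id p.castSucc.succAbove).det -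
        ((rows x m (k + 1)).submatrix id p.castSucc.succAbove).det *
          ((rows y m (k + 1)).submatrix id (Fin.last _).succAbove).det) := by
  rw [← mul_det_consRow_last_prod_smul_rows hxy, mul_assoc, desnanot_jacobi,
    det_submatrix_consRow_prod_smul_rows hxy, det_submatrix_consRow_prod_smul_rows hxy,
    det_submatrix_consRow_last_rows, det_submatrix_consRow_last_rows]

end Ladder

section Trace

variable [CommRing R] {ι : Type*} [Fintype ι] [DecidableEq ι]

theorem sum_det_updateCol (W U : Matrix ι ι R) :
    ∑ j, (W.updateCol j (U.col j)).det = (W.adjugate * U).trace := by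
  simp only [← cramer_apply, cramer_eq_adjugate_mulVec, trace, diag_apply, mul_apply, mulVec,
    dotProduct, col_apply]

theorem sum_det_updateRow (W V : Matrix ι ι R) :
    ∑ i, (W.updateRow i (V.row i)).det = (W.adjugate * V).trace := by
  rw [← trace_transpose, transpose_mul, adjugate_transpose, trace_mul_comm, ← sum_det_updateCol]
  exact Finset.sum_congr rfl fun i _ => by rw [col_transpose, updateCol_transpose, det_transpose]

theorem sum_det_updateCol_sub_sum_det_updateRow {W U V : Matrix ι ι R} {a b : ι → R}
    (h : U - V = diagonal a * W - W * diagonal b) :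
    ∑ j, (W.updateCol j (U.col j)).det - ∑ i, (W.updateRow i (V.row i)).det =
      W.det * (∑ i, a i - ∑ i, b i) := by
  rw [sum_det_updateCol, sum_det_updateRow, ← trace_sub, ← Matrix.mul_sub, h, Matrix.mul_sub,
    ← Matrix.mul_assoc, ← Matrix.mul_assoc, adjugate_mul, trace_sub, trace_mul_comm,
    ← Matrix.mul_assoc, mul_adjugate]
  simp [trace_diagonal, mul_sub]

end Trace

end Determinants

section Contiguity

open Matrix

/-- Contiguity of `H` under a unit shift of its first index, with coefficient `K`. In the paper's
relation `H_{ν+1}(n) - H_ν(n) = -K_ν H_ν(n-1)` the second index is moved up by one; the relation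
in the other direction is `IsContiguous (flip H)`. -/
def IsContiguous (H : ℤ → ℤ → ℂ) (K : ℤ → ℂ) : Prop :=
  ∀ m n, H (m + 1) (n + 1) = H m (n + 1) - K m * H m n

/-- The row `H_m(n), …, H_m(n + l - 1)` of the determinants `φ`. -/
def gridRow (H : ℤ → ℤ → ℂ) (n : ℤ) (l : ℕ) (m : ℤ) : Fin l → ℂ := fun j => H m (n + (j.val : ℤ))

/-- The `(k + 1) × (k + 1)` minor of `H` with rows `m, …, m + k` and columns
`n, …, n + k - 1, n + k + 1`, i.e. `φ` with its last column moved one step to the right. -/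
noncomputable def skipDet (H : ℤ → ℤ → ℂ) (k : ℕ) (m n : ℤ) : ℂ :=
  ((rows (gridRow H n (k + 2)) m (k + 1)).submatrix id (Fin.last k).castSucc.succAbove).det

variable (H : ℤ → ℤ → ℂ) {K c : ℤ → ℂ}

theorem det_rows_gridRow (N : ℕ) (m n : ℤ) : (rows (gridRow H n N) m N).det = phiDet H N m n := rfl

theorem det_rows_gridRow_succAbove_zero (N : ℕ) (m n : ℤ) :
    ((rows (gridRow H n (N + 1)) m N).submatrix id (Fin.succAbove 0)).det =
      phiDet H N m (n + 1) := by
  simp [phiDet, rows, gridRow, submatrix, add_assoc, add_comm (1 : ℤ)]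

theorem det_rows_gridRow_succAbove_last (N : ℕ) (m n : ℤ) :
    ((rows (gridRow H n (N + 1)) m N).submatrix id (Fin.last N).succAbove).det =
      phiDet H N m n := by
  rw [Fin.succAbove_last]; rfl

theorem det_rows_gridRow_castSucc_comp_succAbove_zero (k : ℕ) (m n : ℤ) :
    ((rows (gridRow H n (k + 2)) m k).submatrix id (Fin.castSucc ∘ Fin.succAbove 0)).det =
      phiDet H k m (n + 1) :=
  det_rows_gridRow_succAbove_zero H k m n

theorem det_rows_gridRow_castSucc_comp_succAbove_last (k : ℕ) (m n : ℤ) :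
    ((rows (gridRow H n (k + 2)) m k).submatrix id (Fin.castSucc ∘ (Fin.last k).succAbove)).det =
      phiDet H k m n :=
  det_rows_gridRow_succAbove_last H k m n

theorem phiDet_flip (N : ℕ) (m n : ℤ) : phiDet (flip H) N n m = phiDet H N m n := by
  rw [phiDet, phiDet, ← det_transpose]; rfl

theorem phiDet_zero (m n : ℤ) : phiDet H 0 m n = 1 := det_isEmpty

theorem phiDet_one (m n : ℤ) : phiDet H 1 m n = H m n := by simp [phiDet]

variable {H}

theorem IsContiguous.gridRow_succ (h : IsContiguous H K) (n : ℤ) (l : ℕ) (m : ℤ) :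
    gridRow H (n + 1) l (m + 1) = gridRow H (n + 1) l m - K m • gridRow H n l m := by
  ext j
  simpa [gridRow, add_right_comm n 1] using h m (n + j)

theorem phiDet_plucker_zero (h : IsContiguous H K) (N : ℕ) (m n : ℤ) :
    K m * K (m + N) * phiDet H (N + 1) m n * phiDet H N (m + 1) (n + 2) +
        K m * phiDet H (N + 1) (m + 1) (n + 1) * phiDet H N m (n + 1) =
      K (m + N) * phiDet H (N + 1) m (n + 1) * phiDet H N (m + 1) (n + 1) := by
  cases N with
  | zero =>
    simp only [phiDet_zero, zero_add, phiDet_one, h m n, Nat.cast_zero, add_zero]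
    ring
  | succ k =>
    simpa only [det_rows_gridRow, det_rows_gridRow_succAbove_zero, add_assoc, add_comm (1 : ℤ),
      one_add_one_eq_two, Nat.cast_add, Nat.cast_one] using
      det_rows_plucker (h.gridRow_succ n (k + 2)) m 0

theorem phiDet_plucker_last (h : IsContiguous H K) (N : ℕ) (m n : ℤ) :
    K m * K (m + N) * phiDet H (N + 1) m n * phiDet H N (m + 1) (n + 1) +
        K m * phiDet H (N + 1) (m + 1) (n + 1) * phiDet H N m n =
      K (m + N) * phiDet H (N + 1) m (n + 1) * phiDet H N (m + 1) n := by
  cases N with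
  | zero =>
    simp only [phiDet_zero, zero_add, phiDet_one, h m n, Nat.cast_zero, add_zero]
    ring
  | succ k =>
    simpa only [det_rows_gridRow, det_rows_gridRow_succAbove_last, add_assoc, add_comm (1 : ℤ),
      Nat.cast_add, Nat.cast_one] using
      det_rows_plucker (h.gridRow_succ n (k + 2)) m (Fin.last _)

theorem phiDet_toda_row_succ (h : IsContiguous H K) (k : ℕ) (m n : ℤ) :
    phiDet H (k + 2) m (n + 1) * phiDet H k (m + 1) (n + 1) =
      K m * (phiDet H (k + 1) m n * phiDet H (k + 1) (m + 1) (n + 2) -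
        phiDet H (k + 1) m (n + 1) * phiDet H (k + 1) (m + 1) (n + 1)) := by
  simpa only [det_rows_gridRow, det_rows_gridRow_castSucc_comp_succAbove_zero, Fin.castSucc_zero,
    det_rows_gridRow_succAbove_zero, det_rows_gridRow_succAbove_last, add_assoc,
    one_add_one_eq_two] using
    det_rows_desnanot_jacobi_first (h.gridRow_succ n (k + 2)) m 0

theorem phiDet_toda (h : IsContiguous H K) (k : ℕ) (m n : ℤ) :
    phiDet H (k + 2) m (n + 1) * phiDet H k m (n + 1) =
      K (m + k) * (phiDet H (k + 1) m n * phiDet H (k + 1) m (n + 2) -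
        phiDet H (k + 1) m (n + 1) ^ 2) := by
  simpa only [det_rows_gridRow, det_rows_gridRow_castSucc_comp_succAbove_zero, Fin.castSucc_zero,
    det_rows_gridRow_succAbove_zero, det_rows_gridRow_succAbove_last, add_assoc,
    one_add_one_eq_two, sq] using
    det_rows_desnanot_jacobi_last (h.gridRow_succ n (k + 2)) m 0

theorem phiDet_desnanot_jacobi_skip (H : ℤ → ℤ → ℂ) (k : ℕ) (m n : ℤ) :
    phiDet H (k + 2) m n * phiDet H k (m + 1) n =
      phiDet H (k + 1) m n * skipDet H k (m + 1) n -
        skipDet H k m n * phiDet H (k + 1) (m + 1) n := by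
  simpa only [det_rows_gridRow, det_rows_gridRow_castSucc_comp_succAbove_last,
    det_rows_gridRow_succAbove_last, skipDet] using
    det_rows_desnanot_jacobi (gridRow H n (k + 2)) m (Fin.last k)

theorem phiDet_toda_skip (h : IsContiguous H K) (k : ℕ) (m n : ℤ) :
    phiDet H (k + 2) m (n + 1) * phiDet H k m n =
      K (m + k) * (phiDet H (k + 1) m n * skipDet H k m (n + 1) -
        skipDet H k m n * phiDet H (k + 1) m (n + 1)) := by
  simpa only [det_rows_gridRow, det_rows_gridRow_castSucc_comp_succAbove_last,
    det_rows_gridRow_succAbove_last, skipDet] using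
    det_rows_desnanot_jacobi_last (h.gridRow_succ n (k + 2)) m (Fin.last k)

theorem sum_det_updateCol_gridRow (H : ℤ → ℤ → ℂ) (k : ℕ) (m n : ℤ) :
    ∑ j, ((rows (gridRow H n (k + 1)) m (k + 1)).updateCol j
      ((rows (gridRow H (n + 1) (k + 1)) m (k + 1)).col j)).det = skipDet H k m n := by
  rw [Fin.sum_univ_castSucc, Finset.sum_eq_zero, zero_add, skipDet]
  · congr 1
    ext i j
    cases j using Fin.lastCases <;>
      simp [rows, gridRow, (Fin.castSucc_lt_last _).ne, add_assoc, add_comm (1 : ℤ)]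
  · intro j _
    refine det_zero_of_column_eq (i := j.castSucc) (j := j.succ) Fin.castSucc_lt_succ.ne
      fun i => ?_
    simp [rows, gridRow, (Fin.castSucc_lt_succ (i := j)).ne', add_assoc, add_comm (1 : ℤ)]

theorem sum_det_updateRow_gridRow (H : ℤ → ℤ → ℂ) (k : ℕ) (m n : ℤ) :
    ∑ i, ((rows (gridRow H n (k + 1)) m (k + 1)).updateRow i
      ((rows (gridRow H n (k + 1)) (m + 1) (k + 1)).row i)).det = skipDet (flip H) k n m := by
  rw [← sum_det_updateCol_gridRow]
  refine Finset.sum_congr rfl fun i _ => ?_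
  rw [← det_transpose, ← updateCol_transpose]
  rfl

theorem skipDet_sub_skipDet_flip (hK : IsContiguous H K) (hc : IsContiguous (flip H) c) (k : ℕ)
    (m n : ℤ) : skipDet H k m n - skipDet (flip H) k n m = phiDet H (k + 1) m n *
      (∑ i ∈ Finset.range (k + 1), K (m + i) - ∑ j ∈ Finset.range (k + 1), c (n + j)) := by
  rw [← sum_det_updateCol_gridRow, ← sum_det_updateRow_gridRow, Finset.sum_range, Finset.sum_range,
    ← det_rows_gridRow]
  apply sum_det_updateCol_sub_sum_det_updateRow
  ext i j
  have hrow := hK (m + i) (n + j)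
  have hcol := hc (n + j) (m + i)
  simp only [flip] at hcol
  simp only [Matrix.sub_apply, diagonal_mul, mul_diagonal, rows, gridRow, of_apply]
  rw [add_right_comm n, add_right_comm m]
  linear_combination hcol - hrow

theorem phiDet_bilinear_row_succ (hK : IsContiguous H K) (hc : IsContiguous (flip H) c) (k : ℕ)
    (m n : ℤ) :
    c (n + k) * (phiDet H (k + 2) m n * phiDet H k (m + 1) n) -
        phiDet H (k + 2) (m + 1) n * phiDet H k m n =
      c (n + k) * (phiDet H (k + 1) (m + 1) n * phiDet H (k + 1) m n) *
        (K (m + 1 + k) - K m) := by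
  have hrow := phiDet_desnanot_jacobi_skip H k m n
  have hcol := phiDet_toda_skip hc k n m
  simp only [phiDet_flip] at hcol
  have trace := skipDet_sub_skipDet_flip hK hc k m n
  have trace_succ := skipDet_sub_skipDet_flip hK hc k (m + 1) n
  have hsum : ∑ i ∈ Finset.range (k + 1), K (m + 1 + i) + K m =
      ∑ i ∈ Finset.range (k + 1), K (m + i) + K (m + 1 + k) := by
    rw [Finset.sum_range_succ, Finset.sum_range_succ' (fun i : ℕ => K (m + i))]
    simp only [Nat.cast_add, Nat.cast_one, Nat.cast_zero, add_zero, add_assoc, add_comm (1 : ℤ)]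
    ring
  linear_combination c (n + k) * hrow - hcol + c (n + k) *
    (phiDet H (k + 1) m n * trace_succ - phiDet H (k + 1) (m + 1) n * trace +
    phiDet H (k + 1) (m + 1) n * phiDet H (k + 1) m n * hsum)

theorem phiDet_plucker_last_flip (hc : IsContiguous (flip H) c) (N : ℕ) (m n : ℤ) :
    c n * c (n + N) * phiDet H (N + 1) m n * phiDet H N (m + 1) (n + 1) +
        c n * phiDet H (N + 1) (m + 1) (n + 1) * phiDet H N m n =
      c (n + N) * phiDet H (N + 1) (m + 1) n * phiDet H N m (n + 1) := by
  simpa only [phiDet_flip] using phiDet_plucker_last hc N n m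

theorem phiDet_bilinear_of_proportional_weights (hK : IsContiguous H K)
    (hc : IsContiguous (flip H) c) (N : ℕ) (m n : ℤ)
    (hcK : ∀ j : ℕ, c (n + j) * K m = K (m + j) * c n) (hK0 : ∀ i, K i ≠ 0)
    (hg : phiDet H N m n ≠ 0) :
    c (n + N) * (phiDet H (N + 1) (m + 1) n * phiDet H N m n -
        c (n + N) * phiDet H (N + 1) m n * phiDet H N (m + 1) n) =
      c n * phiDet H (N + 1) (m + 1) (n + 1) * phiDet H N m (n - 1) := by
  cases N with
  | zero =>
    have h := hc n m
    simp only [flip] at h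
    simp [phiDet_zero, phiDet_one, h]
  | succ k =>
    have toda_row_succ := phiDet_toda_row_succ hK k m (n - 1)
    have toda := phiDet_toda hK k m (n - 1)
    have row_succ := phiDet_bilinear_row_succ hK hc k m n
    have plucker := phiDet_plucker_last_flip hc (k + 1) m n
    have hcK_k := hcK k
    have hcK_succ := hcK (k + 1)
    rw [sub_add_cancel, show n - 1 + 2 = n + 1 by ring] at toda_row_succ toda
    rw [show m + 1 + (k : ℤ) = m + (k + 1 : ℕ) by push_cast; ring] at row_succ
    -- `plucker` expresses the right-hand side, multiplied by `φ_m^N(n)`, through products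
    -- `φ^N(n-1) φ^N(n+1)`; the Toda relations `toda_row_succ` and `toda` replace these by
    -- `φ^(N+1) φ^(N-1)`, which `row_succ` evaluates.
    refine mul_left_cancel₀ (mul_ne_zero hg (mul_ne_zero (hK0 (m + k)) (hK0 m))) ?_
    set F := phiDet H (k + 2) (m + 1) n
    set G := phiDet H (k + 2) m n
    set f := phiDet H (k + 1) (m + 1) n
    set g := phiDet H (k + 1) m n
    set gm := phiDet H (k + 1) m (n - 1)
    linear_combination
      c (n + (k + 1 : ℕ)) * (K m * F * toda - K (m + k) * c n * G * toda_row_succ +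
        G * (K m * row_succ - K (m + k) * f * g * hcK_succ +
          (f * g * (K (m + (k + 1 : ℕ)) - K m) - G * phiDet H k (m + 1) n) * hcK_k)) -
        K (m + k) * K m * gm * plucker

end Contiguity

section Solution

/-- The coefficient `a₀² a₁² q^{2m}` of the contiguity relation in the index `m`. -/
noncomputable def rowWeight (q a0 a1 : ℂ) (m : ℤ) : ℂ := a0 ^ 2 * a1 ^ 2 * q ^ (2 * m)

/-- The coefficient `a₀² q^{2n}` of the contiguity relation in the variable `n`. -/
noncomputable def colWeight (q a0 : ℂ) (n : ℤ) : ℂ := a0 ^ 2 * q ^ (2 * n)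

/-- The determinant expression for the `q`-Painlevé III function `f₀`. -/
noncomputable def solF0 (q a0 : ℂ) (H : ℤ → ℤ → ℂ) (ν : ℤ) (N : ℕ) (n : ℤ) : ℂ :=
  -(a0 * q ^ (n + 2 * (N : ℤ))) * (phiDet H (N + 1) (ν - 1) n * phiDet H N ν n) /
    (phiDet H (N + 1) ν n * phiDet H N (ν - 1) n)

/-- The determinant expression for the `q`-Painlevé III function `f₁`. -/
noncomputable def solF1 (q a0 a1 : ℂ) (H : ℤ → ℤ → ℂ) (ν : ℤ) (N : ℕ) (n : ℤ) : ℂ :=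
  1 / (a0 ^ 2 * a1 * q ^ (n + ν + 2 * (N : ℤ) - 2)) *
    ((phiDet H (N + 1) ν n * phiDet H N (ν - 1) (n - 1)) /
      (phiDet H (N + 1) (ν - 1) (n - 1) * phiDet H N ν n))

variable {q a0 a1 : ℂ} {H : ℤ → ℤ → ℂ} {ν : ℤ} {N : ℕ}

theorem isContiguous_rowWeight
    (h : ∀ m n : ℤ, H (m + 1) n - H m n = -(a0 ^ 2 * a1 ^ 2 * q ^ (2 * m)) * H m (n - 1)) :
    IsContiguous H (rowWeight q a0 a1) := fun m n => by
  have hmn := h m (n + 1)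
  rw [add_sub_cancel_right] at hmn
  rw [rowWeight]
  linear_combination hmn

theorem isContiguous_flip_colWeight
    (h : ∀ m n : ℤ, H m (n + 1) - H m n = -(a0 ^ 2 * q ^ (2 * n)) * H (m - 1) n) :
    IsContiguous (flip H) (colWeight q a0) := fun n m => by
  have hmn := h (m + 1) n
  rw [add_sub_cancel_right] at hmn
  simp only [flip, colWeight]
  linear_combination hmn

theorem one_add_mul_solF0 (hq : q ≠ 0) (ha0 : a0 ≠ 0) (ha1 : a1 ≠ 0)
    (hK : IsContiguous H (rowWeight q a0 a1)) (hc : IsContiguous (flip H) (colWeight q a0)) (n : ℤ)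
    (hF : phiDet H (N + 1) ν n ≠ 0) (hg : phiDet H N (ν - 1) n ≠ 0) :
    1 + a0 * q ^ n * solF0 q a0 H ν N n =
      phiDet H (N + 1) ν (n + 1) * phiDet H N (ν - 1) (n - 1) /
        (q ^ (2 * (N : ℤ)) * phiDet H (N + 1) ν n * phiDet H N (ν - 1) n) := by
  have h := phiDet_bilinear_of_proportional_weights hK hc N (ν - 1) n
    (fun j => by simp only [rowWeight, colWeight, mul_add, zpow_add₀ hq]; ring)
    (fun i => by simp [rowWeight, ha0, ha1, zpow_ne_zero _ hq]) hg
  simp only [sub_add_cancel, colWeight, mul_add, zpow_add₀ hq, two_mul] at h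
  simp only [solF0, zpow_add₀ hq, two_mul]
  field_simp at h ⊢
  linear_combination h

theorem mul_zpow_add_solF0 (hq : q ≠ 0) (ha0 : a0 ≠ 0) (ha1 : a1 ≠ 0)
    (hK : IsContiguous H (rowWeight q a0 a1)) (n : ℤ)
    (hF : phiDet H (N + 1) ν n ≠ 0) (hg : phiDet H N (ν - 1) n ≠ 0) :
    a0 * q ^ n + solF0 q a0 H ν N n =
      -(a0 * q ^ n * rowWeight q a0 a1 (ν - 1 + N)) *
        (phiDet H (N + 1) (ν - 1) (n - 1) * phiDet H N ν (n + 1)) /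
        (phiDet H (N + 1) ν n * phiDet H N (ν - 1) n) := by
  have h := phiDet_plucker_zero hK N (ν - 1) (n - 1)
  rw [sub_add_cancel, sub_add_cancel, show n - 1 + 2 = n + 1 by ring] at h
  simp only [rowWeight, mul_add, mul_sub, zpow_add₀ hq, zpow_sub₀ hq, two_mul, zpow_one] at h ⊢
  simp only [solF0, zpow_add₀ hq, two_mul]
  field_simp at h ⊢
  linear_combination h

theorem mul_zpow_add_solF1 (hq : q ≠ 0) (ha0 : a0 ≠ 0) (ha1 : a1 ≠ 0)
    (hK : IsContiguous H (rowWeight q a0 a1)) (n : ℤ)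
    (hG : phiDet H (N + 1) (ν - 1) (n - 1) ≠ 0) (hf : phiDet H N ν n ≠ 0) :
    a1 * q ^ (ν - n) + solF1 q a0 a1 H ν N n =
      a1 * q ^ (ν - n) * (phiDet H (N + 1) (ν - 1) n * phiDet H N ν (n - 1)) /
        (rowWeight q a0 a1 (ν - 1) * phiDet H (N + 1) (ν - 1) (n - 1) * phiDet H N ν n) := by
  have h := phiDet_plucker_last hK N (ν - 1) (n - 1)
  rw [sub_add_cancel, sub_add_cancel] at h
  simp only [rowWeight, mul_add, mul_sub, zpow_add₀ hq, zpow_sub₀ hq, two_mul, zpow_one] at h ⊢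
  simp only [solF1, zpow_add₀ hq, zpow_sub₀ hq, two_mul]
  field_simp at h ⊢
  linear_combination h

theorem one_add_mul_solF1 (hq : q ≠ 0) (ha0 : a0 ≠ 0) (ha1 : a1 ≠ 0)
    (hc : IsContiguous (flip H) (colWeight q a0)) (n : ℤ)
    (hG : phiDet H (N + 1) (ν - 1) (n - 1) ≠ 0) (hf : phiDet H N ν n ≠ 0) :
    1 + a1 * q ^ (ν - n) * solF1 q a0 a1 H ν N n =
      phiDet H (N + 1) ν (n - 1) * phiDet H N (ν - 1) n /
        (colWeight q a0 (n - 1) * phiDet H (N + 1) (ν - 1) (n - 1) * phiDet H N ν n) := by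
  have h := phiDet_plucker_last_flip hc N (ν - 1) (n - 1)
  rw [sub_add_cancel, sub_add_cancel] at h
  simp only [colWeight, mul_add, mul_sub, zpow_add₀ hq, zpow_sub₀ hq, two_mul, zpow_one] at h ⊢
  simp only [solF1, zpow_add₀ hq, zpow_sub₀ hq, two_mul]
  field_simp at h ⊢
  linear_combination h

end Solution

/-- determinant formula for the `q`-PIII specific solutions:
for every fixed `ν ∈ ℤ` and `N ∈ ℤ_{≥0}`,
`f₀(n) = −a₀q^{n+2N} φ_{ν−1}^{N+1}(n)φ_ν^N(n)/(φ_ν^{N+1}(n)φ_{ν−1}^N(n))` and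
`f₁(n) = (1/(a₀²a₁q^{n+ν+2N−2})) φ_ν^{N+1}(n)φ_{ν−1}^N(n−1)/(φ_{ν−1}^{N+1}(n−1)φ_ν^N(n))`
solve `qP3(ν, q^{2N+1})` (i.e. `c = 1`), provided all determinants occurring
are nonzero. -/
theorem qPIII_determinant_solution (q a0 a1 : ℂ)
    (hq : q ≠ 0) (ha0 : a0 ≠ 0) (ha1 : a1 ≠ 0)
    (H : ℤ → ℤ → ℂ)
    (hH1 : ∀ m n : ℤ, H m (n + 1) - H m n = -(a0 ^ 2 * q ^ (2 * n)) * H (m - 1) n)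
    (hH2 : ∀ m n : ℤ, H (m + 1) n - H m n = -(a0 ^ 2 * a1 ^ 2 * q ^ (2 * m)) * H m (n - 1))
    (ν : ℤ) (N : ℕ)
    -- all determinants occurring in the expressions are nonzero
    (hphi : ∀ n : ℤ, phiDet H N ν n ≠ 0 ∧ phiDet H (N + 1) ν n ≠ 0 ∧
      phiDet H N (ν - 1) n ≠ 0 ∧ phiDet H (N + 1) (ν - 1) n ≠ 0)
    (f0 f1 : ℤ → ℂ)
    (hf0 : ∀ n : ℤ, f0 n = -(a0 * q ^ (n + 2 * (N : ℤ))) *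
      (phiDet H (N + 1) (ν - 1) n * phiDet H N ν n) /
      (phiDet H (N + 1) ν n * phiDet H N (ν - 1) n))
    (hf1 : ∀ n : ℤ, f1 n = 1 / (a0 ^ 2 * a1 * q ^ (n + ν + 2 * (N : ℤ) - 2)) *
      ((phiDet H (N + 1) ν n * phiDet H N (ν - 1) (n - 1)) /
        (phiDet H (N + 1) (ν - 1) (n - 1) * phiDet H N ν n))) :
    qP3 q a0 a1 ν (q ^ (2 * (N : ℤ) + 1)) f0 f1 := by
  have hK : IsContiguous H (rowWeight q a0 a1) := isContiguous_rowWeight hH2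
  have hc : IsContiguous (flip H) (colWeight q a0) := isContiguous_flip_colWeight hH1
  obtain rfl : f0 = solF0 q a0 H ν N := funext hf0
  obtain rfl : f1 = solF1 q a0 a1 H ν N := funext hf1
  intro n
  obtain ⟨hf, hF, hg, hG⟩ := hphi n
  obtain ⟨-, -, hgm, hGm⟩ := hphi (n - 1)
  rw [one_add_mul_solF0 hq ha0 ha1 hK hc n hF hg, mul_zpow_add_solF0 hq ha0 ha1 hK n hF hg,
    mul_zpow_add_solF1 hq ha0 ha1 hK n hGm hf, one_add_mul_solF1 hq ha0 ha1 hc n hGm hf]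
  simp only [solF0, solF1, rowWeight, colWeight, add_sub_cancel_right, mul_add, mul_sub,
    zpow_add₀ hq, zpow_sub₀ hq, two_mul, zpow_one]
  constructor <;> field_simp
end

section
/- Let q, a_0, a_1 be nonzero complex constants, let H : ℤ × ℤ → ℂ satisfy the contiguity relations H_ν(n+1) − H_ν(n) = −a_0² q^{2n}·H_{ν−1}(n) and H_{ν+1}(n) − H_ν(n) = −a_0² a_1² q^{2ν}·H_ν(n−1) for all ν, n ∈ ℤ, define φ_ν^{N}(n) = det( H_{ν+i−1}(n+j−1) )_{1 ≤ i,j ≤ N} (with φ_ν^{0}(n) = 1), and set f_0(n) = −a_0 q^{n+2N} · φ_{ν−1}^{N+1}(n) φ_ν^{N}(n) / ( φ_ν^{N+1}(n) φ_{ν−1}^{N}(n) ) and f_1(n) = (1/(a_0² a_1 q^{n+ν+2N−2})) · φ_ν^{N+1}(n) φ_{ν−1}^{N}(n−1) / ( φ_{ν−1}^{N+1}(n−1) φ_ν^{N}(n) ). Then, for all n, ν ∈ ℤ and N ∈ ℤ_{≥0} (with all determinants in denominators nonzero), the following multiplicative formulas hold: (i) 1 + a_0 q^n f_0(n) = q^{−2N}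 · φ_ν^{N+1}(n+1) φ_{ν−1}^{N}(n−1) / ( φ_ν^{N+1}(n) φ_{ν−1}^{N}(n) ); (ii) 1 + f_0(n)/(a_0 q^n) = −a_0² a_1² q^{2(ν+N−1)} · φ_{ν−1}^{N+1}(n−1) φ_ν^{N}(n+1) / ( φ_ν^{N+1}(n) φ_{ν−1}^{N}(n) ); (iii) 1 + a_1 q^{ν−n} f_1(n) = (1/(a_0² q^{2(n−1)})) · φ_ν^{N+1}(n−1) φ_{ν−1}^{N}(n) / ( φ_{ν−1}^{N+1}(n−1) φ_ν^{N}(n) ); (iv) 1 + f_1(n)/(a_1 q^{ν−n}) = (1/(a_0² a_1² q^{2(ν−1)})) · φ_{ν−1}^{N+1}(n) φ_ν^{N}(n−1) / ( φ_{ν−1}^{N+1}(n−1) φ_ν^{N}(n) ). -/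
/-!
Any `N + 2` vectors of an `(N + 1)`-dimensional space are linearly dependent, and expanding the
dependence gives a three-term exchange relation between an `(N + 1)`-form `g` and an `N`-form `f`.
A contiguity relation says that consecutive rows of the determinant at `n + 1` differ by multiples
of the rows at `n`, so row operations replace all but one row at `n + 1` by rows at `n`, and the
exchange relation becomes bilinear in the determinants. Here `g` is the determinant, and all four
formulas are this one identity for different `f`: delete the last column, delete the first column,
or take differences of adjacent columns before taking the `N × N` determinant, possibly after
transposing, which exchanges the two contiguity relations.
-/

section Alternating

open Matrix

variable {R M N : Type*} [CommRing R] [AddCommGroup M] [Module R M] [AddCommGroup N] [Module R N]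

theorem alternatingMap_eq_zero_of_card_lt {ι κ : Type*} [Fintype ι] [Fintype κ]
    (b : Module.Basis κ R M) (hcard : Fintype.card κ < Fintype.card ι) (f : M [⋀^ι]→ₗ[R] N) :
    f = 0 :=
  b.ext_alternating fun _ hv => absurd (Fintype.card_le_of_injective _ hv) hcard.not_ge

theorem alternatingMap_vecCons_last {n : ℕ} (f : M [⋀^Fin (n + 1)]→ₗ[R] N) (w : Fin (n + 1) → M) :
    f (vecCons (w (Fin.last n)) (Fin.init w)) = (-1) ^ n • f w := by
  rw [← f.neg_one_pow_smul_map_insertNth (Fin.last n), Fin.insertNth_last', Fin.snoc_init_self,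
    Fin.val_last]

theorem sum_neg_one_pow_mul_removeNth_eq_zero {n : ℕ} (b : Module.Basis (Fin n) R M)
    (g : M [⋀^Fin n]→ₗ[R] R) (s : M →ₗ[R] R) (x : Fin (n + 1) → M) :
    ∑ i : Fin (n + 1), (-1) ^ (i : ℕ) * (s (x i) * g (i.removeNth x)) = 0 := by
  have vanishes : AlternatingMap.alternatizeUncurryFin (s.smulRight g) x = 0 := by
    rw [alternatingMap_eq_zero_of_card_lt b (by simp) (AlternatingMap.alternatizeUncurryFin _),
      AlternatingMap.zero_apply]
  simpa [AlternatingMap.alternatizeUncurryFin_apply] using vanishes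

theorem alternatingMap_exchange {n : ℕ} (b : Module.Basis (Fin (n + 2)) R M)
    (g : M [⋀^Fin (n + 2)]→ₗ[R] R) (f : M [⋀^Fin (n + 1)]→ₗ[R] R) (c : M) (w : Fin (n + 2) → M) :
    g w * f (vecCons c (Fin.tail (Fin.init w))) =
      g (vecCons c (Fin.tail w)) * f (Fin.init w) -
        g (vecCons c (Fin.init w)) * f (Fin.tail w) := by
  set inner : Fin n → M := Fin.tail (Fin.init w) with inner_def
  let slot : M →ₗ[R] R :=
    { toFun := fun x => f (vecCons x inner)
      map_add' := f.map_vecCons_add inner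
      map_smul' := f.map_vecCons_smul inner }
  have slot_first : slot (w 0) = f (Fin.init w) :=
    congrArg f (Fin.cons_self_tail (Fin.init w))
  have slot_last : slot (w (Fin.last (n + 1))) = (-1) ^ n * f (Fin.tail w) := by
    have := alternatingMap_vecCons_last f (Fin.tail w)
    simpa [slot, inner_def, Fin.tail_init_eq_init_tail, Fin.tail] using this
  -- The expansion has only three surviving terms because `slot` vanishes on the inner vectors.
  have slot_inner (i : Fin n) : slot (w i.castSucc.succ) = 0 :=
    f.map_eq_zero_of_eq (i := 0) (j := i.succ) _ rfl (Fin.succ_ne_zero i).symm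
  have last_eq : vecCons c w (Fin.last (n + 1 + 1)) = w (Fin.last (n + 1)) := rfl
  have remove_second : Fin.removeNth 1 (vecCons c w) = vecCons c (Fin.tail w) := by
    ext i
    refine Fin.cases rfl (fun i => rfl) i
  have remove_last : Fin.removeNth (Fin.last (n + 2)) (vecCons c w) = vecCons c (Fin.init w) := by
    rw [Fin.removeNth_last]
    ext i
    refine Fin.cases rfl (fun i => rfl) i
  have expansion := sum_neg_one_pow_mul_removeNth_eq_zero b g slot (vecCons c w)
  rw [Fin.sum_univ_succ, Fin.sum_univ_succ, Fin.sum_univ_castSucc] at expansion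
  simp only [Fin.coe_ofNat_eq_mod, Nat.zero_mod, pow_zero, cons_val_zero, Fin.removeNth_zero,
    Fin.tail_vecCons, one_mul, Fin.succ_zero_eq_one, Nat.one_mod, pow_one, cons_val_one,
    slot_first, remove_second, neg_mul, Fin.val_succ, Fin.val_castSucc, cons_val_succ, slot_inner,
    zero_mul, mul_zero, Finset.sum_const_zero, Fin.succ_last, Nat.succ_eq_add_one, Fin.val_last,
    last_eq, slot_last, remove_last, zero_add] at expansion
  have sign : ((-1 : R) ^ n) * (-1) ^ n = 1 := by rw [← mul_pow]; simp
  linear_combination expansion - f (Fin.tail w) * g (vecCons c (Fin.init w)) * sign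

theorem alternatingMap_telescope {n : ℕ} (f : M [⋀^Fin (n + 1)]→ₗ[R] N) {γ : ℕ → R} {r w : ℕ → M}
    (hr : ∀ i, r (i + 1) = r i + γ i • w i) :
    f (fun i => r i) = (∏ i ∈ Finset.range n, γ i) • f (vecCons (r 0) fun i => w i) := by
  induction n generalizing r w γ with
  | zero =>
    rw [Finset.prod_range_zero, one_smul]
    exact congrArg f (funext (Fin.cases rfl fun i => i.elim0))
  | succ n ih =>
    have split_r : (fun i : Fin (n + 2) => r i) = vecCons (r 0) fun i : Fin (n + 1) => r (i + 1) :=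
      funext (Fin.cases rfl fun i => rfl)
    have split_w : (fun i : Fin (n + 1) => w i) = vecCons (w 0) fun i : Fin n => w (i + 1) :=
      funext (Fin.cases rfl fun i => rfl)
    calc f (fun i => r i) = f.curryLeft (r 0) (fun i => r (i + 1)) := by
          rw [AlternatingMap.curryLeft_apply_apply, split_r]
      _ = (∏ i ∈ Finset.range n, γ (i + 1)) •
            f.curryLeft (r 0) (vecCons (r 1) fun i => w (i + 1)) :=
        ih (f.curryLeft (r 0)) (γ := fun i => γ (i + 1)) (r := fun i => r (i + 1))
          (w := fun i => w (i + 1)) fun i => hr (i + 1)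
      _ = (∏ i ∈ Finset.range (n + 1), γ i) • f (vecCons (r 0) fun i => w i) := by
        have hself : f.curryLeft (r 0) (vecCons (r 0) fun i : Fin n => w (i + 1)) = 0 :=
          f.map_eq_zero_of_eq (i := 0) (j := 1) _ rfl zero_ne_one
        rw [hr 0, AlternatingMap.map_vecCons_add, AlternatingMap.map_vecCons_smul, hself, zero_add,
          smul_smul, ← Finset.prod_range_succ', AlternatingMap.curryLeft_apply_apply, split_w]

theorem alternatingMap_telescope_succ {n : ℕ} (f : M [⋀^Fin (n + 2)]→ₗ[R] N) {γ : ℕ → R}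
    {r w : ℕ → M} (hr : ∀ i, r (i + 1) = r i + γ i • w i) :
    f (fun i => r i) = (∏ i ∈ Finset.range (n + 1), γ i) • f (vecCons (r 1) fun i => w i) := by
  have hself : f (vecCons (w 0) fun i : Fin (n + 1) => w i) = 0 :=
    f.map_eq_zero_of_eq (i := 0) (j := 1) _ rfl zero_ne_one
  rw [alternatingMap_telescope f hr, hr 0, f.map_vecCons_add, f.map_vecCons_smul, hself,
    smul_zero, add_zero]

theorem alternatingMap_three_term {n : ℕ} (b : Module.Basis (Fin (n + 1)) R M)
    (g : M [⋀^Fin (n + 1)]→ₗ[R] R) (f : M [⋀^Fin n]→ₗ[R] R) {γ : ℕ → R} {r w : ℕ → M}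
    (hr : ∀ i, r (i + 1) = r i + γ i • w i) :
    γ 0 * γ n * (g (fun i => w i) * f (fun i => r (i + 1))) +
      γ n * (g (fun i => r i) * f (fun i => w (i + 1))) =
        γ 0 * (g (fun i => r (i + 1)) * f (fun i => w i)) := by
  rcases n with - | n
  · have single (x : ℕ → M) : (fun i : Fin 1 => x i) = vecCons (x 0) ![] :=
      funext (Fin.cases rfl fun i => i.elim0)
    rw [single r, single w, single fun i => r (i + 1), hr 0, g.map_vecCons_add,
      g.map_vecCons_smul, smul_eq_mul, Subsingleton.elim (fun i : Fin 0 => r (i + 1)) ![],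
      Subsingleton.elim (fun i : Fin 0 => w (i + 1)) ![],
      Subsingleton.elim (fun i : Fin 0 => w i) ![]]
    ring
  · have exchange := alternatingMap_exchange b g f (r 1) fun i => w i
    have g_r := alternatingMap_telescope_succ g hr
    have hr_succ (i : ℕ) : r (i + 1 + 1) = r (i + 1) + γ (i + 1) • w (i + 1) := hr (i + 1)
    have g_r_succ := alternatingMap_telescope g (γ := fun i => γ (i + 1))
      (r := fun i => r (i + 1)) (w := fun i => w (i + 1)) hr_succ
    have f_r_succ := alternatingMap_telescope f (γ := fun i => γ (i + 1))
      (r := fun i => r (i + 1)) (w := fun i => w (i + 1)) hr_succ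
    rw [Finset.prod_range_succ', smul_eq_mul] at g_r
    rw [Finset.prod_range_succ, smul_eq_mul] at g_r_succ
    rw [smul_eq_mul] at f_r_succ
    rw [g_r, g_r_succ, f_r_succ]
    simp only [Fin.tail_def, Fin.init_def, Fin.val_succ, Fin.val_castSucc] at exchange
    linear_combination γ 0 * γ (n + 1) * (∏ i ∈ Finset.range n, γ (i + 1)) * exchange

end Alternating

section Window

variable {R : Type*} [CommRing R]

/-- The determinant `φ_ν^K(n)` of the `K × K` block of `H` with corner `(ν, n)`, as in `phiDet`
but over any commutative ring. -/
def windowDet (H : ℤ → ℤ → R) (K : ℕ) (ν n : ℤ) : R :=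
  (Matrix.of fun i j : Fin K => H (ν + i) (n + j)).det

/-- The determinant of the `N × N` matrix obtained by applying `L` to each row of the `N × K` block
of `H` with corner `(ν, n)`; `L` stands for deleting a column or taking column differences. -/
def projectedDet {K N : ℕ} (L : (Fin K → R) →ₗ[R] Fin N → R) (H : ℤ → ℤ → R) (ν n : ℤ) : R :=
  (Matrix.of fun i : Fin N => L fun j => H (ν + i) (n + j)).det

/-- The relation between neighbouring rows of `H`, with arbitrary weights `β`. The relation between
neighbouring columns is the same one for `Function.swap H`. -/
def RowContiguous (β : ℤ → R) (H : ℤ → ℤ → R) : Prop :=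
  ∀ m n, H (m + 1) n - H m n = β m * H m (n - 1)

theorem windowDet_swap (H : ℤ → ℤ → R) (K : ℕ) (ν n : ℤ) :
    windowDet (Function.swap H) K n ν = windowDet H K ν n :=
  Matrix.det_transpose (Matrix.of fun i j : Fin K => H (ν + i) (n + j))

variable {α β : ℤ → R} {H : ℤ → ℤ → R}

theorem RowContiguous.windowDet_bilinear_projection (hH : RowContiguous β H) {N : ℕ}
    (L : (Fin (N + 1) → R) →ₗ[R] Fin N → R) (ν n : ℤ) :
    β ν * β (ν + N) * (windowDet H (N + 1) ν n * projectedDet L H (ν + 1) (n + 1)) +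
      β (ν + N) * (windowDet H (N + 1) ν (n + 1) * projectedDet L H (ν + 1) n) =
        β ν * (windowDet H (N + 1) (ν + 1) (n + 1) * projectedDet L H ν n) := by
  have hr (i : ℕ) : (fun j : Fin (N + 1) => H (ν + (i + 1 : ℕ)) (n + 1 + j)) =
      (fun j : Fin (N + 1) => H (ν + i) (n + 1 + j)) +
        β (ν + i) • fun j : Fin (N + 1) => H (ν + i) (n + j) := by
    ext j
    have := hH (ν + i) (n + 1 + j)
    rw [add_right_comm n, add_sub_cancel_right] at this
    rw [Pi.add_apply, Pi.smul_apply, smul_eq_mul, add_right_comm n, ← this, add_sub_cancel,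
      Nat.cast_succ, ← add_assoc]
  have key := alternatingMap_three_term (Pi.basisFun R (Fin (N + 1))) Matrix.detRowAlternating
    (Matrix.detRowAlternating.compLinearMap L) (γ := fun i => β (ν + i))
    (r := fun i j => H (ν + i) (n + 1 + j)) (w := fun i j => H (ν + i) (n + j)) hr
  have shift (i : ℕ) : ν + (i + 1 : ℕ) = ν + 1 + i := by push_cast; ring
  simp only [shift, Nat.cast_zero, add_zero] at key
  exact key

theorem RowContiguous.windowDet_bilinear_last (hH : RowContiguous β H) (N : ℕ) (ν n : ℤ) :
    β ν * β (ν + N) * (windowDet H (N + 1) ν n * windowDet H N (ν + 1) (n + 1)) +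
      β (ν + N) * (windowDet H (N + 1) ν (n + 1) * windowDet H N (ν + 1) n) =
        β ν * (windowDet H (N + 1) (ν + 1) (n + 1) * windowDet H N ν n) :=
  hH.windowDet_bilinear_projection (LinearMap.funLeft R R Fin.castSucc) ν n

theorem RowContiguous.windowDet_bilinear_first (hH : RowContiguous β H) (N : ℕ) (ν n : ℤ) :
    β ν * β (ν + N) * (windowDet H (N + 1) ν n * windowDet H N (ν + 1) (n + 1 + 1)) +
      β (ν + N) * (windowDet H (N + 1) ν (n + 1) * windowDet H N (ν + 1) (n + 1)) =
        β ν * (windowDet H (N + 1) (ν + 1) (n + 1) * windowDet H N ν (n + 1)) := by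
  have drop_first (μ m : ℤ) : projectedDet (N := N) (LinearMap.funLeft R R Fin.succ) H μ m =
      windowDet H N μ (m + 1) := by
    simp [projectedDet, windowDet, LinearMap.funLeft, Function.comp_def, add_assoc,
      add_comm (1 : ℤ)]
  simpa only [drop_first] using
    hH.windowDet_bilinear_projection (N := N) (LinearMap.funLeft R R Fin.succ) ν n

theorem RowContiguous.det_column_differences (hH : RowContiguous α (Function.swap H)) (K : ℕ)
    (ν n : ℤ) :
    (Matrix.of fun i j : Fin K => H (ν + i) (n + 1 + j) - H (ν + i) (n + j)).det =
      (∏ j ∈ Finset.range K, α (n + j)) * windowDet H K (ν - 1) n := by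
  have entry (i j : Fin K) : H (ν + i) (n + 1 + j) - H (ν + i) (n + j) =
      α (n + j) * H (ν - 1 + i) (n + j) := by
    rw [add_right_comm n, sub_add_eq_add_sub]
    exact hH (n + j) (ν + i)
  simp only [entry]
  rw [← Fin.prod_univ_eq_prod_range fun j => α (n + (j : ℤ))]
  exact Matrix.det_mul_row _ _

theorem RowContiguous.windowDet_bilinear_difference [IsDomain R] (hβ : RowContiguous β H)
    (hα : RowContiguous α (Function.swap H)) (hα₀ : ∀ n, α n ≠ 0) (N : ℕ) (ν n : ℤ) :
    α (n + N) * (β ν * β (ν + N)) * (windowDet H (N + 1) ν n * windowDet H N ν (n + 1)) +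
      α n * β (ν + N) * (windowDet H (N + 1) ν (n + 1) * windowDet H N ν n) =
        α n * β ν * (windowDet H (N + 1) (ν + 1) (n + 1) * windowDet H N (ν - 1) n) := by
  let P (m : ℤ) : R := ∏ j ∈ Finset.range N, α (m + j)
  let difference : (Fin (N + 1) → R) →ₗ[R] Fin N → R :=
    LinearMap.funLeft R R Fin.succ - LinearMap.funLeft R R Fin.castSucc
  have projected (μ m : ℤ) :
      projectedDet difference H μ m = P m * windowDet H N (μ - 1) m := by
    rw [← hα.det_column_differences, projectedDet]
    congr 2
    ext i j
    simp [difference, LinearMap.funLeft_apply, add_assoc, add_comm (1 : ℤ)]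
  have shift_weights : P (n + 1) * α n = P n * α (n + N) := by
    have := Finset.prod_range_succ' (fun j : ℕ => α (n + j)) N
    rw [Finset.prod_range_succ] at this
    simpa [P, add_assoc, add_comm (1 : ℤ)] using this.symm
  have key := hβ.windowDet_bilinear_projection difference ν n
  simp only [projected, add_sub_cancel_right] at key
  apply mul_left_cancel₀ (Finset.prod_ne_zero_iff.mpr fun j _ => hα₀ (n + j) : P n ≠ 0)
  linear_combination α n * key - β ν * β (ν + N) * windowDet H (N + 1) ν n *
    windowDet H N ν (n + 1) * shift_weights

end Window

section Geometric

variable {K : Type*} [Field K] {q a0 a1 : K} {H : ℤ → ℤ → K} {ν n : ℤ} {N : ℕ}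

/-- The geometric weight `-c q^{2m}` of the contiguity relations of the paper. -/
def qWeight (c q : K) (m : ℤ) : K :=
  -(c * q ^ (2 * m))

theorem qWeight_ne_zero {c : K} (hc : c ≠ 0) (hq : q ≠ 0) (m : ℤ) : qWeight c q m ≠ 0 :=
  neg_ne_zero.mpr (mul_ne_zero hc (zpow_ne_zero _ hq))

/-- The determinant quotient `f₀(n)` of the paper, the first component of its solution of the
`q`-Painlevé III equation. -/
def tauQuotient₀ (q a0 : K) (H : ℤ → ℤ → K) (N : ℕ) (ν n : ℤ) : K :=
  -(a0 * q ^ (n + 2 * (N : ℤ))) *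
    (windowDet H (N + 1) (ν - 1) n * windowDet H N ν n) /
    (windowDet H (N + 1) ν n * windowDet H N (ν - 1) n)

/-- The determinant quotient `f₁(n)` of the paper, the second component of its solution of the
`q`-Painlevé III equation. -/
def tauQuotient₁ (q a0 a1 : K) (H : ℤ → ℤ → K) (N : ℕ) (ν n : ℤ) : K :=
  1 / (a0 ^ 2 * a1 * q ^ (n + ν + 2 * (N : ℤ) - 2)) *
    ((windowDet H (N + 1) ν n * windowDet H N (ν - 1) (n - 1)) /
      (windowDet H (N + 1) (ν - 1) (n - 1) * windowDet H N ν n))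

theorem one_add_mul_tauQuotient₀ (hq : q ≠ 0) (ha0 : a0 ≠ 0) (ha1 : a1 ≠ 0)
    (hcol : RowContiguous (qWeight (a0 ^ 2) q) (Function.swap H))
    (hrow : RowContiguous (qWeight (a0 ^ 2 * a1 ^ 2) q) H)
    (hτ : windowDet H (N + 1) ν n ≠ 0) (hτ' : windowDet H N (ν - 1) n ≠ 0) :
    1 + a0 * q ^ n * tauQuotient₀ q a0 H N ν n = q ^ (-2 * (N : ℤ)) *
      (windowDet H (N + 1) ν (n + 1) * windowDet H N (ν - 1) (n - 1)) /
      (windowDet H (N + 1) ν n * windowDet H N (ν - 1) n) := by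
  have bilinear := hcol.windowDet_bilinear_difference hrow
    (qWeight_ne_zero (mul_ne_zero (pow_ne_zero 2 ha0) (pow_ne_zero 2 ha1)) hq) N n (ν - 1)
  simp only [windowDet_swap, sub_add_cancel] at bilinear
  simp only [qWeight, neg_mul, two_mul, zpow_add₀ hq, zpow_sub₀ hq, zpow_neg, zpow_one,
    tauQuotient₀] at bilinear ⊢
  field_simp at bilinear ⊢
  linear_combination bilinear

theorem one_add_tauQuotient₀_div (hq : q ≠ 0) (ha0 : a0 ≠ 0) (ha1 : a1 ≠ 0)
    (hrow : RowContiguous (qWeight (a0 ^ 2 * a1 ^ 2) q) H)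
    (hτ : windowDet H (N + 1) ν n ≠ 0) (hτ' : windowDet H N (ν - 1) n ≠ 0) :
    1 + tauQuotient₀ q a0 H N ν n / (a0 * q ^ n) =
      -(a0 ^ 2 * a1 ^ 2 * q ^ (2 * (ν + (N : ℤ) - 1))) *
        (windowDet H (N + 1) (ν - 1) (n - 1) * windowDet H N ν (n + 1)) /
        (windowDet H (N + 1) ν n * windowDet H N (ν - 1) n) := by
  have bilinear := hrow.windowDet_bilinear_first N (ν - 1) (n - 1)
  simp only [sub_add_cancel] at bilinear
  simp only [qWeight, two_mul, zpow_add₀ hq, zpow_sub₀ hq, zpow_one, tauQuotient₀] at bilinear ⊢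
  field_simp at bilinear ⊢
  linear_combination bilinear

theorem one_add_mul_tauQuotient₁ (hq : q ≠ 0) (ha0 : a0 ≠ 0) (ha1 : a1 ≠ 0)
    (hcol : RowContiguous (qWeight (a0 ^ 2) q) (Function.swap H))
    (hτ : windowDet H (N + 1) (ν - 1) (n - 1) ≠ 0) (hτ' : windowDet H N ν n ≠ 0) :
    1 + a1 * q ^ (ν - n) * tauQuotient₁ q a0 a1 H N ν n = 1 / (a0 ^ 2 * q ^ (2 * (n - 1))) *
      ((windowDet H (N + 1) ν (n - 1) * windowDet H N (ν - 1) n) /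
        (windowDet H (N + 1) (ν - 1) (n - 1) * windowDet H N ν n)) := by
  have bilinear := hcol.windowDet_bilinear_last N (n - 1) (ν - 1)
  simp only [windowDet_swap, sub_add_cancel] at bilinear
  simp only [qWeight, two_mul, zpow_add₀ hq, zpow_sub₀ hq, zpow_one, tauQuotient₁] at bilinear ⊢
  field_simp at bilinear ⊢
  linear_combination bilinear

theorem one_add_tauQuotient₁_div (hq : q ≠ 0) (ha0 : a0 ≠ 0) (ha1 : a1 ≠ 0)
    (hrow : RowContiguous (qWeight (a0 ^ 2 * a1 ^ 2) q) H)
    (hτ : windowDet H (N + 1) (ν - 1) (n - 1) ≠ 0) (hτ' : windowDet H N ν n ≠ 0) :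
    1 + tauQuotient₁ q a0 a1 H N ν n / (a1 * q ^ (ν - n)) =
      1 / (a0 ^ 2 * a1 ^ 2 * q ^ (2 * (ν - 1))) *
        ((windowDet H (N + 1) (ν - 1) n * windowDet H N ν (n - 1)) /
          (windowDet H (N + 1) (ν - 1) (n - 1) * windowDet H N ν n)) := by
  have bilinear := hrow.windowDet_bilinear_last N (ν - 1) (n - 1)
  simp only [sub_add_cancel] at bilinear
  simp only [qWeight, two_mul, zpow_add₀ hq, zpow_sub₀ hq, zpow_one, tauQuotient₁] at bilinear ⊢
  field_simp at bilinear ⊢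
  linear_combination bilinear

theorem qPIII_multiplicative_formulas_general (hq : q ≠ 0) (ha0 : a0 ≠ 0) (ha1 : a1 ≠ 0)
    (hcol : RowContiguous (qWeight (a0 ^ 2) q) (Function.swap H))
    (hrow : RowContiguous (qWeight (a0 ^ 2 * a1 ^ 2) q) H)
    (h₀ : windowDet H (N + 1) ν n ≠ 0) (h₀' : windowDet H N (ν - 1) n ≠ 0)
    (h₁ : windowDet H (N + 1) (ν - 1) (n - 1) ≠ 0) (h₁' : windowDet H N ν n ≠ 0) :
    (1 + a0 * q ^ n * tauQuotient₀ q a0 H N ν n = q ^ (-2 * (N : ℤ)) *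
        (windowDet H (N + 1) ν (n + 1) * windowDet H N (ν - 1) (n - 1)) /
        (windowDet H (N + 1) ν n * windowDet H N (ν - 1) n)) ∧
      (1 + tauQuotient₀ q a0 H N ν n / (a0 * q ^ n) =
        -(a0 ^ 2 * a1 ^ 2 * q ^ (2 * (ν + (N : ℤ) - 1))) *
          (windowDet H (N + 1) (ν - 1) (n - 1) * windowDet H N ν (n + 1)) /
          (windowDet H (N + 1) ν n * windowDet H N (ν - 1) n)) ∧
      (1 + a1 * q ^ (ν - n) * tauQuotient₁ q a0 a1 H N ν n = 1 / (a0 ^ 2 * q ^ (2 * (n - 1))) *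
        ((windowDet H (N + 1) ν (n - 1) * windowDet H N (ν - 1) n) /
          (windowDet H (N + 1) (ν - 1) (n - 1) * windowDet H N ν n))) ∧
      (1 + tauQuotient₁ q a0 a1 H N ν n / (a1 * q ^ (ν - n)) =
        1 / (a0 ^ 2 * a1 ^ 2 * q ^ (2 * (ν - 1))) *
          ((windowDet H (N + 1) (ν - 1) n * windowDet H N ν (n - 1)) /
            (windowDet H (N + 1) (ν - 1) (n - 1) * windowDet H N ν n))) :=
  ⟨one_add_mul_tauQuotient₀ hq ha0 ha1 hcol hrow h₀ h₀',
    one_add_tauQuotient₀_div hq ha0 ha1 hrow h₀ h₀',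
    one_add_mul_tauQuotient₁ hq ha0 ha1 hcol h₁ h₁',
    one_add_tauQuotient₁_div hq ha0 ha1 hrow h₁ h₁'⟩

end Geometric

/-- the multiplicative formulas (Proposition `multi` of the paper)
for `f₀, f₁` built from the determinants `φ_ν^N(n)`. -/
theorem qPIII_multiplicative_formulas (q a0 a1 : ℂ)
    (hq : q ≠ 0) (ha0 : a0 ≠ 0) (ha1 : a1 ≠ 0)
    (H : ℤ → ℤ → ℂ)
    (hH1 : ∀ m n : ℤ, H m (n + 1) - H m n = -(a0 ^ 2 * q ^ (2 * n)) * H (m - 1) n)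
    (hH2 : ∀ m n : ℤ, H (m + 1) n - H m n = -(a0 ^ 2 * a1 ^ 2 * q ^ (2 * m)) * H m (n - 1))
    (ν : ℤ) (N : ℕ)
    -- all determinants occurring in denominators are nonzero
    (hphi : ∀ n : ℤ, phiDet H N ν n ≠ 0 ∧ phiDet H (N + 1) ν n ≠ 0 ∧
      phiDet H N (ν - 1) n ≠ 0 ∧ phiDet H (N + 1) (ν - 1) n ≠ 0)
    (f0 f1 : ℤ → ℂ)
    (hf0 : ∀ n : ℤ, f0 n = -(a0 * q ^ (n + 2 * (N : ℤ))) *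
      (phiDet H (N + 1) (ν - 1) n * phiDet H N ν n) /
      (phiDet H (N + 1) ν n * phiDet H N (ν - 1) n))
    (hf1 : ∀ n : ℤ, f1 n = 1 / (a0 ^ 2 * a1 * q ^ (n + ν + 2 * (N : ℤ) - 2)) *
      ((phiDet H (N + 1) ν n * phiDet H N (ν - 1) (n - 1)) /
        (phiDet H (N + 1) (ν - 1) (n - 1) * phiDet H N ν n))) :
    ∀ n : ℤ,
      (1 + a0 * q ^ n * f0 n = q ^ (-2 * (N : ℤ)) *
        (phiDet H (N + 1) ν (n + 1) * phiDet H N (ν - 1) (n - 1)) /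
        (phiDet H (N + 1) ν n * phiDet H N (ν - 1) n)) ∧
      (1 + f0 n / (a0 * q ^ n) = -(a0 ^ 2 * a1 ^ 2 * q ^ (2 * (ν + (N : ℤ) - 1))) *
        (phiDet H (N + 1) (ν - 1) (n - 1) * phiDet H N ν (n + 1)) /
        (phiDet H (N + 1) ν n * phiDet H N (ν - 1) n)) ∧
      (1 + a1 * q ^ (ν - n) * f1 n = 1 / (a0 ^ 2 * q ^ (2 * (n - 1))) *
        ((phiDet H (N + 1) ν (n - 1) * phiDet H N (ν - 1) n) /
          (phiDet H (N + 1) (ν - 1) (n - 1) * phiDet H N ν n))) ∧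
      (1 + f1 n / (a1 * q ^ (ν - n)) = 1 / (a0 ^ 2 * a1 ^ 2 * q ^ (2 * (ν - 1))) *
        ((phiDet H (N + 1) (ν - 1) n * phiDet H N ν (n - 1)) /
          (phiDet H (N + 1) (ν - 1) (n - 1) * phiDet H N ν n))) := by
  intro n
  rw [hf0, hf1]
  exact qPIII_multiplicative_formulas_general hq ha0 ha1 (fun n m => hH1 m n) hH2
    (hphi n).2.1 (hphi n).2.2.1 (hphi (n - 1)).2.2.2 (hphi n).1
end
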